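/- Assume d ≥ 3 and let a, b > 0. Then there exist ε = ε_{b,a} > 0 and η = η_{b,a} > 0 such that for all N large enough, P̃_{N,a,b}(ξ̃_N > εN^d | Ω_N⁺) ≥ 1 − exp(−ηN^d), where ξ̃_N = ∑_{x∈Λ_N} 1_{φ(x)∈[0,a]} and Ω_N⁺ = {φ(x) ≥ 0 for all x ∈ Λ_N}. -/

import Mathlib

open MeasureTheory Real Finset

noncomputable section

/-- The nearest neighbours of a point of `ℤ^d`. -/
def nbrs (d : ℕ) (x : Fin d → ℤ) : Finset (Fin d → ℤ) :=
  (Finset.univ : Finset (Fin d × Bool)).image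
    (fun p => Function.update x p.1 (x p.1 + if p.2 then 1 else -1))

/-- Outer boundary of a finite subset of `ℤ^d`. -/
def bdry (d : ℕ) (A : Finset (Fin d → ℤ)) : Finset (Fin d → ℤ) :=
  A.biUnion (nbrs d) \ A

/-- The Gaussian free field Hamiltonian
`H_A(φ) = (1/8d) ∑_{x,y ∈ A ∪ ∂A, |x-y| = 1} (φ x - φ y)²`. -/
def ham (d : ℕ) (A : Finset (Fin d → ℤ)) (φ : (Fin d → ℤ) → ℝ) : ℝ :=
  (1 / (8 * d)) * ∑ x ∈ A ∪ bdry d A, ∑ y ∈ A ∪ bdry d A,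
    if y ∈ nbrs d x then (φ x - φ y) ^ 2 else 0

/-- Extension of a field on `A` by zero boundary conditions. -/
def extz {d : ℕ} (A : Finset (Fin d → ℤ)) (ψ : A → ℝ) : (Fin d → ℤ) → ℝ :=
  fun x => if h : x ∈ A then ψ ⟨x, h⟩ else 0

/-- Unnormalized density of the zero-boundary GFF on `A`. -/
def gffDensity (d : ℕ) (A : Finset (Fin d → ℤ)) (ψ : A → ℝ) : ℝ :=
  Real.exp (-ham d A (extz A ψ))

/-- Partition function of the zero-boundary GFF on `A`. -/
def gffZ (d : ℕ) (A : Finset (Fin d → ℤ)) : ℝ :=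
  ∫ ψ : A → ℝ, gffDensity d A ψ

/-- The zero-boundary Gaussian free field measure on `A ⊂ ℤ^d`. -/
def gff (d : ℕ) (A : Finset (Fin d → ℤ)) : Measure (A → ℝ) :=
  (ENNReal.ofReal (gffZ d A))⁻¹ •
    volume.withDensity (fun ψ => ENNReal.ofReal (gffDensity d A ψ))

/-- The box `Λ_N = {-⌊N/2⌋, …, ⌊N/2⌋}^d`. -/
def box (d N : ℕ) : Finset (Fin d → ℤ) :=
  Fintype.piFinset (fun _ => Finset.Icc (-(N / 2 : ℤ)) (N / 2 : ℤ))

/-- Unnormalized density of the square-well pinned field on `Λ_N`. -/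
def pinDensity (d N : ℕ) (a b : ℝ) (ψ : box d N → ℝ) : ℝ :=
  Real.exp (-ham d (box d N) (extz (box d N) ψ) +
    b * ∑ x : box d N, (if ψ x ∈ Set.Icc 0 a then (1 : ℝ) else 0))

/-- Partition function of the pinned field. -/
def pinZ (d N : ℕ) (a b : ℝ) : ℝ := ∫ ψ : box d N → ℝ, pinDensity d N a b ψ

/-- The square-well pinning measure `P̃_{N,a,b}` on the box `Λ_N`. -/
def pin (d N : ℕ) (a b : ℝ) : Measure (box d N → ℝ) :=
  (ENNReal.ofReal (pinZ d N a b))⁻¹ •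
    volume.withDensity (fun ψ => ENNReal.ofReal (pinDensity d N a b ψ))

/-- The number of pinned points `ξ̃_N`. -/
def numPinned (d N : ℕ) (a : ℝ) (ψ : box d N → ℝ) : ℕ :=
  (Finset.univ.filter (fun x : box d N => ψ x ∈ Set.Icc 0 a)).card

/-- The hard wall event `Ω⁺_B` within the box, for fields on `Λ_N`: nonnegativity
at every point of `B`. -/
def wallOn (d N : ℕ) (B : Finset (Fin d → ℤ)) : Set (box d N → ℝ) :=
  {ψ | ∀ x : box d N, (x : Fin d → ℤ) ∈ B → 0 ≤ ψ x}

/-- The hard-wall event for the zero-boundary GFF on `A`. -/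
def wall {d : ℕ} (A : Finset (Fin d → ℤ)) : Set (A → ℝ) := {ψ | ∀ x, 0 ≤ ψ x}

end
/-- Sum over the simplex at level `n`. -/
noncomputable def lvl (n : ℕ) (F : ℕ → ℕ → ℕ → ℝ) : ℝ :=
  ∑ p ∈ antidiagonal n, ∑ q ∈ antidiagonal p.2, F p.1 q.1 q.2

lemma lvl_mono (n : ℕ) {F G : ℕ → ℕ → ℕ → ℝ} (h : ∀ i j k, i + j + k = n → F i j k ≤ G i j k) :
    lvl n F ≤ lvl n G := by
  unfold lvl
  refine Finset.sum_le_sum fun p hp => Finset.sum_le_sum fun q hq => h _ _ _ ?_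
  rw [HasAntidiagonal.mem_antidiagonal] at hp hq
  omega

lemma lvl_congr (n : ℕ) {F G : ℕ → ℕ → ℕ → ℝ} (h : ∀ i j k, i + j + k = n → F i j k = G i j k) :
    lvl n F = lvl n G :=
  le_antisymm (lvl_mono n fun i j k e => (h i j k e).le) (lvl_mono n fun i j k e => (h i j k e).ge)

lemma lvl_add (n : ℕ) (F G : ℕ → ℕ → ℕ → ℝ) :
    lvl n (fun i j k => F i j k + G i j k) = lvl n F + lvl n G := by
  simp [lvl, sum_add_distrib]

lemma lvl_sub (n : ℕ) (F G : ℕ → ℕ → ℕ → ℝ) :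
    lvl n (fun i j k => F i j k - G i j k) = lvl n F - lvl n G := by
  simp [lvl, sum_sub_distrib]

lemma lvl_mul (n : ℕ) (c : ℝ) (F : ℕ → ℕ → ℕ → ℝ) :
    lvl n (fun i j k => c * F i j k) = c * lvl n F := by
  simp [lvl, mul_sum]

lemma lvl_one (n : ℕ) : lvl n (fun _ _ _ => 1) = (n + 1) * (n + 2) / 2 := by
  have : ∀ n : ℕ, lvl n (fun _ _ _ => 1) = ∑ k ∈ range (n + 1), ((k : ℝ) + 1) := by
    intro n
    simp [lvl]
    rw [Finset.Nat.sum_antidiagonal_eq_sum_range_succ_mk]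
    rw [← Finset.sum_range_reflect]
    refine Finset.sum_congr rfl fun k hk => ?_
    have := mem_range.1 hk
    have h2 : n - (n + 1 - 1 - k) = k := by omega
    simp only [h2]
  rw [this]
  clear this
  induction n with
  | zero => norm_num
  | succ n ih => rw [sum_range_succ, ih]; push_cast; ring

lemma lvl_s1 (n : ℕ) (F : ℕ → ℕ → ℕ → ℝ) :
    lvl (n + 1) (fun i j k => (i : ℝ) * F i j k) =
      lvl n (fun i j k => ((i : ℝ) + 1) * F (i + 1) j k) := by
  unfold lvl
  rw [Finset.Nat.sum_antidiagonal_succ]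
  simp

lemma lvl_s2 (n : ℕ) (F : ℕ → ℕ → ℕ → ℝ) :
    lvl (n + 1) (fun i j k => (j : ℝ) * F i j k) =
      lvl n (fun i j k => ((j : ℝ) + 1) * F i (j + 1) k) := by
  unfold lvl
  rw [Finset.Nat.sum_antidiagonal_succ']
  simp [Finset.Nat.sum_antidiagonal_succ]

lemma lvl_s3 (n : ℕ) (F : ℕ → ℕ → ℕ → ℝ) :
    lvl (n + 1) (fun i j k => (k : ℝ) * F i j k) =
      lvl n (fun i j k => ((k : ℝ) + 1) * F i j (k + 1)) := by
  unfold lvl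
  rw [Finset.Nat.sum_antidiagonal_succ']
  simp [Finset.Nat.sum_antidiagonal_succ']

lemma lvl_cs (n : ℕ) (F : ℕ → ℕ → ℕ → ℝ) :
    (lvl n F) ^ 2 ≤ (n + 1) * (n + 2) / 2 * lvl n (fun i j k => F i j k ^ 2) := by
  rw [← lvl_one]
  have h : ∀ t : ℝ, 0 ≤ lvl n (fun _ _ _ => 1) * (t * t) + (-2 * lvl n F) * t +
      lvl n (fun i j k => F i j k ^ 2) := by
    intro t
    have h1 : 0 ≤ lvl n (fun i j k => (t - F i j k) ^ 2) := by
      unfold lvl; positivity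
    have h2 : lvl n (fun i j k => (t - F i j k) ^ 2) =
        lvl n (fun i j k => ((t * t) * 1 + (-2 * t) * F i j k) + F i j k ^ 2) :=
      lvl_congr n fun i j k _ => by ring
    rw [h2, lvl_add, lvl_add, lvl_mul n (t * t) (fun _ _ _ => 1), lvl_mul] at h1
    linarith
  have := discrim_le_zero h
  unfold discrim at this
  nlinarith

/-- Local energy in the octant. -/
def enr (F : ℕ → ℕ → ℕ → ℝ) (i j k : ℕ) : ℝ :=
  (F i j k - F (i + 1) j k) ^ 2 + (F i j k - F i (j + 1) k) ^ 2 + (F i j k - F i j (k + 1)) ^ 2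

lemma lvl_step (n : ℕ) (F : ℕ → ℕ → ℕ → ℝ) :
    (2 / (((n : ℝ) + 1) * (n + 2)) * lvl n F -
      2 / (((n + 1 : ℕ) + 1 : ℝ) * ((n + 1 : ℕ) + 2)) * lvl (n + 1) F) ^ 2 ≤
    2 / (((n : ℝ) + 1) * (n + 2)) * lvl n (enr F) := by
  set g : ℕ → ℕ → ℕ → ℝ := fun i j k => ((i : ℝ) + 1) * (F i j k - F (i + 1) j k) +
    ((j : ℝ) + 1) * (F i j k - F i (j + 1) k) + ((k : ℝ) + 1) * (F i j k - F i j (k + 1)) with hg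
  have h1 : ((n : ℝ) + 1) * lvl (n + 1) F = lvl n (fun i j k => ((i : ℝ) + 1) * F (i + 1) j k +
      ((j : ℝ) + 1) * F i (j + 1) k + ((k : ℝ) + 1) * F i j (k + 1)) := by
    rw [lvl_add, lvl_add, ← lvl_s1, ← lvl_s2 n F, ← lvl_s3 n F, ← lvl_add, ← lvl_add, ← lvl_mul]
    refine lvl_congr _ fun i j k e => ?_
    have : (i : ℝ) + j + k = n + 1 := by exact_mod_cast e
    rw [← this]; ring
  have h2 : ((n : ℝ) + 3) * lvl n F = lvl n (fun i j k => ((i : ℝ) + 1) * F i j k +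
      ((j : ℝ) + 1) * F i j k + ((k : ℝ) + 1) * F i j k) := by
    rw [← lvl_mul]
    refine lvl_congr _ fun i j k e => ?_
    have : (i : ℝ) + j + k = n := by exact_mod_cast e
    rw [← this]; ring
  have h3 : ((n : ℝ) + 3) * lvl n F - ((n : ℝ) + 1) * lvl (n + 1) F = lvl n g := by
    rw [h1, h2, ← lvl_sub]
    exact lvl_congr _ fun i j k e => by simp only [hg]; ring
  have h4 : lvl n (fun i j k => g i j k ^ 2) ≤ ((n : ℝ) + 3) ^ 2 * lvl n (enr F) := by
    rw [← lvl_mul]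
    refine lvl_mono _ fun i j k e => ?_
    have : (i : ℝ) + j + k = n := by exact_mod_cast e
    rw [← this]
    simp only [hg, enr]
    set x := F i j k - F (i + 1) j k
    set y := F i j k - F i (j + 1) k
    set z := F i j k - F i j (k + 1)
    have a1 : (0 : ℝ) ≤ i := by positivity
    have a2 : (0 : ℝ) ≤ j := by positivity
    have a3 : (0 : ℝ) ≤ k := by positivity
    set A := (i : ℝ) + 1 with hA
    set B := (j : ℝ) + 1 with hB
    set C := (k : ℝ) + 1 with hC
    have e3 : (i : ℝ) + j + k + 3 = A + B + C := by rw [hA, hB, hC]; ring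
    rw [e3]
    have c1 : (A * x + B * y + C * z) ^ 2 ≤ (A ^ 2 + B ^ 2 + C ^ 2) * (x ^ 2 + y ^ 2 + z ^ 2) := by
      nlinarith [sq_nonneg (A * y - B * x), sq_nonneg (A * z - C * x), sq_nonneg (B * z - C * y)]
    refine c1.trans ?_
    have : A ^ 2 + B ^ 2 + C ^ 2 ≤ (A + B + C) ^ 2 := by
      have : 0 ≤ A * B := by positivity
      have : 0 ≤ A * C := by positivity
      have : 0 ≤ B * C := by positivity
      nlinarith
    exact mul_le_mul_of_nonneg_right this (by positivity)
  have h5 := lvl_cs n g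
  have h6 : 2 / (((n : ℝ) + 1) * (n + 2)) * lvl n F -
      2 / (((n + 1 : ℕ) + 1 : ℝ) * ((n + 1 : ℕ) + 2)) * lvl (n + 1) F =
      2 / (((n : ℝ) + 1) * (n + 2)) / (n + 3) * lvl n g := by
    rw [← h3]; push_cast; field_simp; ring
  rw [h6, mul_pow]
  calc _ ≤ (2 / (((n : ℝ) + 1) * (n + 2)) / (n + 3)) ^ 2 *
        ((n + 1) * (n + 2) / 2 * (((n : ℝ) + 3) ^ 2 * lvl n (enr F))) := by
        gcongr
        exact h5.trans (by gcongr)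
    _ = _ := by field_simp

lemma csum_le (M : ℕ) : ∑ n ∈ range M, 2 / (((n : ℝ) + 1) * (n + 2)) ≤ 2 := by
  have : ∑ n ∈ range M, 2 / (((n : ℝ) + 1) * (n + 2)) = 2 - 2 / ((M : ℝ) + 1) := by
    induction M with
    | zero => simp
    | succ n ih => rw [sum_range_succ, ih]; push_cast; field_simp; ring
  rw [this]
  have : 0 ≤ 2 / ((M : ℝ) + 1) := by positivity
  linarith

lemma flow3 (F : ℕ → ℕ → ℕ → ℝ) (M : ℕ) (hF : ∀ i j k, i + j + k = M → F i j k = 0) :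
    F 0 0 0 ^ 2 ≤ 2 * ∑ n ∈ range M, lvl n (enr F) := by
  set A : ℕ → ℝ := fun n => 2 / (((n : ℝ) + 1) * (n + 2)) * lvl n F with hA
  have h0 : A 0 = F 0 0 0 := by simp [hA, lvl]
  have hM : A M = 0 := by
    have : lvl M F = lvl M (fun _ _ _ => 0 * 0) := lvl_congr _ fun i j k e => by simp [hF i j k e]
    simp only [hA, this, lvl_mul]; simp
  have h1 : F 0 0 0 = ∑ n ∈ range M, (A n - A (n + 1)) := by
    rw [Finset.sum_range_sub', h0, hM, sub_zero]
  rw [h1]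
  have h2 := Finset.sum_sq_le_sum_mul_sum_of_sq_le_mul (range M)
    (r := fun n => A n - A (n + 1)) (f := fun n : ℕ => 2 / (((n : ℝ) + 1) * (n + 2)))
    (g := fun n => lvl n (enr F)) (fun n _ => by positivity)
    (fun n _ => by unfold lvl enr; positivity) (fun n _ => lvl_step n F)
  refine h2.trans ?_
  have : 0 ≤ ∑ n ∈ range M, lvl n (enr F) :=
    Finset.sum_nonneg fun n _ => by unfold lvl enr; positivity
  exact mul_le_mul_of_nonneg_right (csum_le M) this

lemma mem_nbrs_symm {d : ℕ} {x y : Fin d → ℤ} (h : y ∈ nbrs d x) : x ∈ nbrs d y := by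
  unfold nbrs at *
  simp only [mem_image, mem_univ, true_and] at *
  obtain ⟨⟨i, s⟩, rfl⟩ := h
  refine ⟨⟨i, !s⟩, ?_⟩
  ext l
  by_cases hl : l = i
  · subst hl; cases s <;> simp
  · simp [Function.update_of_ne hl]

/-- Local energy at a site. -/
noncomputable def locE (d : ℕ) (A : Finset (Fin d → ℤ)) (f : (Fin d → ℤ) → ℝ) (z : Fin d → ℤ) : ℝ :=
  ∑ y ∈ A ∪ bdry d A, if y ∈ nbrs d z then (f z - f y) ^ 2 else 0

lemma locE_nonneg (d : ℕ) (A : Finset (Fin d → ℤ)) (f : (Fin d → ℤ) → ℝ) (z : Fin d → ℤ) :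
    0 ≤ locE d A f z := by
  unfold locE
  exact Finset.sum_nonneg fun y _ => by split_ifs <;> positivity

lemma diff_zero {d : ℕ} {A : Finset (Fin d → ℤ)} {f : (Fin d → ℤ) → ℝ}
    (hf : ∀ x, x ∉ A → f x = 0) {z y : Fin d → ℤ} (hy : y ∈ nbrs d z)
    (hn : y ∉ A ∪ bdry d A) : f z - f y = 0 := by
  have h1 : y ∉ A := fun h => hn (mem_union_left _ h)
  have h2 : z ∉ A := by
    intro h
    apply hn
    apply mem_union_right
    unfold bdry
    rw [mem_sdiff, mem_biUnion]
    exact ⟨⟨z, h, hy⟩, h1⟩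
  rw [hf _ h1, hf _ h2, sub_zero]

lemma sum_le_locE {d : ℕ} {A : Finset (Fin d → ℤ)} {f : (Fin d → ℤ) → ℝ}
    (hf : ∀ x, x ∉ A → f x = 0) (z : Fin d → ℤ) (s : Finset (Fin d → ℤ)) (hs : s ⊆ nbrs d z) :
    ∑ y ∈ s, (f z - f y) ^ 2 ≤ locE d A f z := by
  unfold locE
  rw [← Finset.sum_filter]
  rw [← Finset.sum_filter_add_sum_filter_not s (fun y => y ∈ A ∪ bdry d A)]
  have : ∑ y ∈ s with ¬ (y ∈ A ∪ bdry d A), (f z - f y) ^ 2 = 0 := by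
    refine Finset.sum_eq_zero fun y hy => ?_
    rw [mem_filter] at hy
    rw [diff_zero hf (hs hy.1) hy.2]; norm_num
  rw [this, add_zero]
  refine Finset.sum_le_sum_of_subset_of_nonneg ?_ fun _ _ _ => by positivity
  intro y hy
  rw [mem_filter] at hy ⊢
  exact ⟨hy.2, hs hy.1⟩

/-- Points of the octant based at `x`. -/
def opt (d : ℕ) (x : Fin d → ℤ) (i j k : ℕ) : Fin d → ℤ := fun l =>
  x l + if l.1 = 0 then (i : ℤ) else if l.1 = 1 then (j : ℤ) else if l.1 = 2 then (k : ℤ) else 0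

lemma enr_le_locE {d : ℕ} (hd : 3 ≤ d) {A : Finset (Fin d → ℤ)} {f : (Fin d → ℤ) → ℝ}
    (hf : ∀ x, x ∉ A → f x = 0) (x : Fin d → ℤ) (i j k : ℕ) :
    enr (fun i j k => f (opt d x i j k)) i j k ≤ locE d A f (opt d x i j k) := by
  have n1 : opt d x (i + 1) j k ∈ nbrs d (opt d x i j k) := by
    unfold nbrs
    rw [mem_image]
    refine ⟨(⟨0, by omega⟩, true), mem_univ _, ?_⟩
    ext l
    by_cases hl : l = ⟨0, by omega⟩
    · subst hl; simp [opt]; ring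
    · have : l.1 ≠ 0 := fun h => hl (Fin.ext h)
      simp [Function.update_of_ne hl, opt, this]
  have n2 : opt d x i (j + 1) k ∈ nbrs d (opt d x i j k) := by
    unfold nbrs
    rw [mem_image]
    refine ⟨(⟨1, by omega⟩, true), mem_univ _, ?_⟩
    ext l
    by_cases hl : l = ⟨1, by omega⟩
    · subst hl; simp [opt]; ring
    · have : l.1 ≠ 1 := fun h => hl (Fin.ext h)
      simp [Function.update_of_ne hl, opt, this]
  have n3 : opt d x i j (k + 1) ∈ nbrs d (opt d x i j k) := by
    unfold nbrs
    rw [mem_image]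
    refine ⟨(⟨2, by omega⟩, true), mem_univ _, ?_⟩
    ext l
    by_cases hl : l = ⟨2, by omega⟩
    · subst hl; simp [opt]; ring
    · have : l.1 ≠ 2 := fun h => hl (Fin.ext h)
      simp [Function.update_of_ne hl, opt, this]
  have d12 : opt d x (i + 1) j k ≠ opt d x i (j + 1) k := fun h => by
    have := congrFun h ⟨0, by omega⟩
    simp [opt] at this
  have d13 : opt d x (i + 1) j k ≠ opt d x i j (k + 1) := fun h => by
    have := congrFun h ⟨0, by omega⟩
    simp [opt] at this
  have d23 : opt d x i (j + 1) k ≠ opt d x i j (k + 1) := fun h => by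
    have := congrFun h ⟨1, by omega⟩
    simp [opt] at this
  have := sum_le_locE hf (opt d x i j k)
    {opt d x (i + 1) j k, opt d x i (j + 1) k, opt d x i j (k + 1)} (by
      intro y hy
      simp only [mem_insert, mem_singleton] at hy
      rcases hy with rfl | rfl | rfl <;> assumption)
  rw [sum_insert (by simp [d12, d13]), sum_insert (by simp [d23]), sum_singleton] at this
  simp only [enr]
  linarith

lemma locE_zero {d : ℕ} {A : Finset (Fin d → ℤ)} {f : (Fin d → ℤ) → ℝ}
    (hf : ∀ x, x ∉ A → f x = 0) {z : Fin d → ℤ} (hz : z ∉ A ∪ bdry d A) : locE d A f z = 0 := by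
  unfold locE
  refine Finset.sum_eq_zero fun y _ => ?_
  split_ifs with h
  · have := diff_zero hf (mem_nbrs_symm h) hz
    have h2 : f z - f y = 0 := by linarith
    rw [h2]; norm_num
  · rfl

lemma ham_lb {d : ℕ} (hd : 3 ≤ d) (A : Finset (Fin d → ℤ)) (f : (Fin d → ℤ) → ℝ)
    (hf : ∀ x, x ∉ A → f x = 0) (x : Fin d → ℤ) : f x ^ 2 ≤ 16 * d * ham d A f := by
  have hdpos : (0 : ℝ) < d := by exact_mod_cast (by omega : 0 < d)
  have hham : 16 * d * ham d A f = 2 * ∑ z ∈ A ∪ bdry d A, locE d A f z := by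
    unfold ham locE
    field_simp
    ring
  rw [hham]
  let s : (Fin d → ℤ) → ℤ := fun z => z ⟨0, by omega⟩ + z ⟨1, by omega⟩ + z ⟨2, by omega⟩
  obtain ⟨Bd, hBd⟩ := (A.image s).bddAbove
  obtain ⟨M, hM⟩ : ∃ M : ℕ, Bd < s x + M := by
    refine ⟨(Bd - s x + 1).toNat, ?_⟩
    have := Int.self_le_toNat (Bd - s x + 1)
    omega
  have hs : ∀ i j k : ℕ, s (opt d x i j k) = s x + (i + j + k : ℕ) := by
    intro i j k
    simp [s, opt]
    ring
  have h1 := flow3 (fun i j k => f (opt d x i j k)) M (by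
    intro i j k e
    apply hf
    intro hA
    have := hBd (mem_coe.2 (mem_image_of_mem s hA))
    rw [hs, e] at this
    omega)
  have h0 : opt d x 0 0 0 = x := by
    ext l; simp [opt]
  simp only [h0] at h1
  refine h1.trans ?_
  gcongr
  set T : Finset ((_ : ℕ) × (_ : ℕ × ℕ) × (ℕ × ℕ)) :=
    (range M).sigma (fun n => (antidiagonal n).sigma (fun p => antidiagonal p.2)) with hT
  have h2 : ∑ n ∈ range M, lvl n (enr fun i j k => f (opt d x i j k)) =
      ∑ t ∈ T, enr (fun i j k => f (opt d x i j k)) t.2.1.1 t.2.2.1 t.2.2.2 := by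
    rw [hT, Finset.sum_sigma]
    refine Finset.sum_congr rfl fun n _ => ?_
    rw [Finset.sum_sigma]
    rfl
  rw [h2]
  calc _ ≤ ∑ t ∈ T, locE d A f (opt d x t.2.1.1 t.2.2.1 t.2.2.2) :=
        Finset.sum_le_sum fun t _ => enr_le_locE hd hf x _ _ _
    _ = ∑ z ∈ T.image (fun t => opt d x t.2.1.1 t.2.2.1 t.2.2.2), locE d A f z := by
        rw [Finset.sum_image]
        rintro ⟨n, ⟨p1, p2⟩, ⟨q1, q2⟩⟩ ht ⟨n', ⟨p1', p2'⟩, ⟨q1', q2'⟩⟩ ht' e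
        simp only [hT, coe_sigma, Set.mem_sigma_iff, mem_coe,
          HasAntidiagonal.mem_antidiagonal] at ht ht'
        have e0 := congrFun e ⟨0, by omega⟩
        have e1 := congrFun e ⟨1, by omega⟩
        have e2 := congrFun e ⟨2, by omega⟩
        simp [opt] at e0 e1 e2
        obtain ⟨-, a1, a2⟩ := ht
        obtain ⟨-, b1, b2⟩ := ht'
        have hp : p2 = p2' := by omega
        have hn : n = n' := by omega
        subst e0 e1 e2 hp hn
        rfl
    _ ≤ ∑ z ∈ T.image (fun t => opt d x t.2.1.1 t.2.2.1 t.2.2.2) ∪ (A ∪ bdry d A), locE d A f z :=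
        Finset.sum_le_sum_of_subset_of_nonneg subset_union_left fun _ _ _ => locE_nonneg _ _ _ _
    _ = ∑ z ∈ A ∪ bdry d A, locE d A f z := by
        symm
        refine Finset.sum_subset subset_union_right fun z _ hz => locE_zero hf hz

section Abstract

variable {ι : Type*} [Fintype ι]

lemma bil_cont (B : (ι → ℝ) →ₗ[ℝ] (ι → ℝ) →ₗ[ℝ] ℝ) : Continuous fun φ => B φ φ := by
  have : (fun φ => B φ φ) = fun φ => B.toContinuousBilinearMap φ φ := rfl
  rw [this]
  fun_prop

lemma bil_cont_left (B : (ι → ℝ) →ₗ[ℝ] (ι → ℝ) →ₗ[ℝ] ℝ) (v : ι → ℝ) :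
    Continuous fun φ => B φ v := by
  have : (fun φ => B φ v) = fun φ => B.toContinuousBilinearMap φ v := rfl
  rw [this]
  fun_prop

lemma bil_integrable (B : (ι → ℝ) →ₗ[ℝ] (ι → ℝ) →ₗ[ℝ] ℝ) {C : ℝ} (hC : 0 < C)
    (hB : ∀ φ x, φ x ^ 2 ≤ C * B φ φ) {s : ℝ} (hs : 0 < s) :
    Integrable (fun φ : ι → ℝ => rexp (-(s * B φ φ))) := by
  set c : ℝ := s / (C * (Fintype.card ι + 1)) with hc
  have hcpos : 0 < c := by positivity
  have h1 : Integrable (fun φ : ι → ℝ => ∏ x, rexp (-c * φ x ^ 2)) :=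
    Integrable.fintype_prod (fun _ => integrable_exp_neg_mul_sq hcpos)
  refine h1.mono' ?_ ?_
  · exact (Continuous.rexp ((continuous_const.mul (bil_cont B)).neg)).aestronglyMeasurable
  · refine Filter.Eventually.of_forall fun φ => ?_
    rw [Real.norm_eq_abs, abs_of_pos (exp_pos _), ← Real.exp_sum, exp_le_exp, ← Finset.mul_sum]
    have h2 : ∑ x, φ x ^ 2 ≤ Fintype.card ι * (C * B φ φ) := by
      calc _ ≤ ∑ _x : ι, C * B φ φ := Finset.sum_le_sum fun x _ => hB φ x
        _ = _ := by simp
    have h3 : ∑ x, φ x ^ 2 ≤ (Fintype.card ι + 1) * (C * B φ φ) := by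
      have h0 : 0 ≤ ∑ x, φ x ^ 2 := Finset.sum_nonneg fun _ _ => by positivity
      by_cases hn : Fintype.card ι = 0
      · have : IsEmpty ι := Fintype.card_eq_zero_iff.1 hn
        have : φ = 0 := by ext x; exact isEmptyElim x
        subst this
        simp
      · have hn' : (0 : ℝ) < Fintype.card ι := by exact_mod_cast Nat.pos_of_ne_zero hn
        have : 0 ≤ C * B φ φ := by
          by_contra! hneg
          have := mul_neg_of_pos_of_neg hn' hneg
          linarith
        linarith
    have h4 : c * ∑ x, φ x ^ 2 ≤ c * ((Fintype.card ι + 1) * (C * B φ φ)) := by gcongr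
    have h5 : c * ((Fintype.card ι + 1) * (C * B φ φ)) = s * B φ φ := by
      rw [hc]; field_simp
    linarith

lemma bil_integrable_coord (B : (ι → ℝ) →ₗ[ℝ] (ι → ℝ) →ₗ[ℝ] ℝ) {C : ℝ} (hC : 0 < C)
    (hB : ∀ φ x, φ x ^ 2 ≤ C * B φ φ) (x : ι) :
    Integrable (fun φ : ι → ℝ => φ x * rexp (-B φ φ)) := by
  have h1 := (bil_integrable B hC hB (s := 1 / 2) (by norm_num)).const_mul (1 + 2 * C)
  refine h1.mono' ?_ ?_
  · exact ((continuous_apply x).mul (Continuous.rexp (bil_cont B).neg)).aestronglyMeasurable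
  · refine Filter.Eventually.of_forall fun φ => ?_
    rw [norm_mul, Real.norm_eq_abs, Real.norm_eq_abs, abs_of_pos (exp_pos (-B φ φ))]
    have hb := hB φ x
    set t := B φ φ
    have ht : 0 ≤ t := by
      by_contra! h
      nlinarith [sq_nonneg (φ x)]
    have e1 : rexp (-t) = rexp (-(1 / 2 * t)) * rexp (-(1 / 2 * t)) := by
      rw [← Real.exp_add]; congr 1; ring
    have e2 : |φ x| ≤ 1 + C * t := by
      have : |φ x| ^ 2 = φ x ^ 2 := sq_abs _
      nlinarith [sq_nonneg (|φ x| - 1)]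
    have e3 : (1 + C * t) * rexp (-(1 / 2 * t)) ≤ 1 + 2 * C := by
      rw [Real.exp_neg, ← div_eq_mul_inv, div_le_iff₀ (exp_pos _)]
      have := Real.add_one_le_exp (1 / 2 * t)
      have h6 : (1 + 2 * C) * (1 / 2 * t + 1) ≤ (1 + 2 * C) * rexp (1 / 2 * t) := by gcongr
      nlinarith
    rw [e1, ← mul_assoc]
    refine mul_le_mul_of_nonneg_right (le_trans ?_ e3) (exp_pos _).le
    exact mul_le_mul_of_nonneg_right e2 (exp_pos _).le

lemma exists_green [DecidableEq ι] (B : (ι → ℝ) →ₗ[ℝ] (ι → ℝ) →ₗ[ℝ] ℝ) {C K : ℝ} (hC : 0 < C)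
    (hB : ∀ φ x, φ x ^ 2 ≤ C * B φ φ) (hsymm : ∀ φ ψ, B φ ψ = B ψ φ)
    (x : ι) (hK : B (Pi.single x 1) (Pi.single x 1) ≤ K) :
    ∃ (l : ℝ) (u : ι → ℝ), 1 / C ≤ l ∧ l ≤ K ∧ u x = 1 ∧ ∀ φ, B φ u = l * φ x := by
  have hinj : Function.Injective B := by
    rw [injective_iff_map_eq_zero]
    intro φ hφ
    ext y
    have := hB φ y
    rw [hφ] at this
    simp at this
    exact this
  have hpos : ∀ φ, 0 ≤ B φ φ := fun φ => by
    by_contra! h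
    nlinarith [sq_nonneg (φ x), hB φ x]
  have hsurj : Function.Surjective B := by
    refine (LinearMap.injective_iff_surjective_of_finrank_eq_finrank ?_).1 hinj
    exact (Subspace.dual_finrank_eq).symm
  obtain ⟨v, hv⟩ := hsurj (LinearMap.proj x)
  have hv' : ∀ φ, B φ v = φ x := fun φ => by rw [hsymm, hv]; rfl
  have hvx : 0 < v x := by
    have h1 := hv' v
    have h2 := hB v x
    have h3 := hpos v
    rw [h1] at h3
    rcases h3.lt_or_eq with h | h
    · exact h
    · exfalso
      have h4 : v = 0 := by
        ext y
        have := hB v y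
        rw [h1, ← h, mul_zero] at this
        simpa using this
      have := hv' (Pi.single x 1)
      rw [h4] at this
      simp at this
  refine ⟨(v x)⁻¹, (v x)⁻¹ • v, ?_, ?_, ?_, ?_⟩
  · rw [one_div]
    apply inv_anti₀ hvx
    have := hB v x
    rw [hv'] at this
    nlinarith
  · -- Cauchy-Schwarz
    have h := hpos (Pi.single x 1 - (v x)⁻¹ • v)
    simp only [map_sub, map_smul, LinearMap.sub_apply, LinearMap.smul_apply, smul_eq_mul, hv'] at h
    rw [hsymm v (Pi.single x 1), hv'] at h
    simp at h
    rw [inv_mul_cancel₀ hvx.ne'] at h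
    simp at h
    linarith
  · simp [hvx.ne']
  · intro φ
    simp [hv']

/-- The marginal at `x` is a Gaussian measure. -/
lemma exists_marginal [DecidableEq ι] (B : (ι → ℝ) →ₗ[ℝ] (ι → ℝ) →ₗ[ℝ] ℝ) {C K : ℝ} (hC : 0 < C)
    (hB : ∀ φ x, φ x ^ 2 ≤ C * B φ φ) (hsymm : ∀ φ ψ, B φ ψ = B ψ φ)
    (x : ι) (hK : B (Pi.single x 1) (Pi.single x 1) ≤ K) :
    ∃ (l : ℝ) (c : NNReal), 1 / C ≤ l ∧ l ≤ K ∧ ∀ g : ℝ → ENNReal, Measurable g →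
      ∫⁻ φ : ι → ℝ, g (φ x) * ENNReal.ofReal (rexp (-B φ φ)) =
        c * ∫⁻ t, g t * ENNReal.ofReal (rexp (-l * t ^ 2)) := by
  obtain ⟨l, u, hl1, hl2, hux, hu⟩ := exists_green B hC hB hsymm x hK
  have hl : 0 < l := lt_of_lt_of_le (by positivity) hl1
  have hmB : Measurable fun φ : ι → ℝ => B φ φ := (bil_cont B).measurable
  set D : (ι → ℝ) → ENNReal := fun φ => ENNReal.ofReal (rexp (l * φ x ^ 2 - B φ φ)) with hD
  have hDm : Measurable D := by
    rw [hD]; fun_prop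
  set ν : Measure ℝ := (volume.withDensity D).map (fun φ => φ x) with hν
  have hνl : ∀ g : ℝ → ENNReal, Measurable g → ∫⁻ t, g t ∂ν = ∫⁻ φ, D φ * g (φ x) := by
    intro g hg
    rw [hν, lintegral_map hg (measurable_pi_apply x), lintegral_withDensity_eq_lintegral_mul _ hDm
      (g := fun φ => g (φ x)) (hg.comp (measurable_pi_apply x))]
    rfl
  have hinv : ν.IsAddLeftInvariant := by
    constructor
    intro r
    ext S hS
    rw [Measure.map_apply (measurable_const_add r) hS]
    rw [← lintegral_indicator_one hS, ← lintegral_indicator_one ((measurable_const_add r) hS)]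
    rw [hνl _ (measurable_one.indicator hS),
      hνl _ (measurable_one.indicator ((measurable_const_add r) hS))]
    rw [← lintegral_add_right_eq_self (fun φ => D φ * S.indicator 1 (φ x)) (r • u)]
    refine lintegral_congr fun φ => ?_
    have h1 : D (φ + r • u) = D φ := by
      simp only [hD]
      congr 2
      have := hu u
      simp only [map_add, map_smul, LinearMap.add_apply, LinearMap.smul_apply, smul_eq_mul,
        Pi.add_apply, Pi.smul_apply, hsymm u φ, hu, hux]
      ring
    have h2 : (φ + r • u) x = r + φ x := by simp [hux, add_comm]
    rw [h1, h2]
    rfl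
  have hfin : IsFiniteMeasureOnCompacts ν := by
    constructor
    intro S hS
    obtain ⟨R, hR⟩ := hS.isBounded.exists_norm_le
    rw [← lintegral_indicator_one hS.measurableSet,
      hνl _ (measurable_one.indicator hS.measurableSet)]
    have h1 : ∫⁻ φ : ι → ℝ, ENNReal.ofReal (rexp (l * R ^ 2) * rexp (-(1 * B φ φ))) < ⊤ :=
      ((bil_integrable B hC hB one_pos).const_mul _).lintegral_lt_top
    refine lt_of_le_of_lt (lintegral_mono fun φ => ?_) h1
    by_cases hφ : φ x ∈ S
    · simp only [Set.indicator_of_mem hφ, Pi.one_apply, mul_one, hD]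
      apply ENNReal.ofReal_le_ofReal
      rw [← Real.exp_add, exp_le_exp]
      have := hR _ hφ
      have h2 : φ x ^ 2 ≤ R ^ 2 := by
        rw [← sq_abs]; rw [Real.norm_eq_abs] at this; gcongr
      nlinarith
    · simp [Set.indicator_of_notMem hφ]
  refine ⟨l, Measure.addHaarScalarFactor ν volume, hl1, hl2, fun g hg => ?_⟩
  have hfac := Measure.isAddLeftInvariant_eq_smul ν volume
  have h1 := hνl (fun t => g t * ENNReal.ofReal (rexp (-l * t ^ 2))) (by fun_prop)
  rw [hfac, lintegral_smul_measure] at h1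
  rw [ENNReal.smul_def, smul_eq_mul] at h1
  rw [h1]
  refine lintegral_congr fun φ => ?_
  simp only [hD]
  rw [mul_left_comm, ← ENNReal.ofReal_mul (exp_pos _).le, ← Real.exp_add]
  congr 3
  ring

lemma exists_marginal_real [DecidableEq ι] (B : (ι → ℝ) →ₗ[ℝ] (ι → ℝ) →ₗ[ℝ] ℝ) {C K : ℝ}
    (hC : 0 < C) (hB : ∀ φ x, φ x ^ 2 ≤ C * B φ φ) (hsymm : ∀ φ ψ, B φ ψ = B ψ φ)
    (x : ι) (hK : B (Pi.single x 1) (Pi.single x 1) ≤ K) :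
    ∃ (l : ℝ) (c : NNReal), 1 / C ≤ l ∧ l ≤ K ∧ ∀ g : ℝ → ℝ, Measurable g →
      ∫ φ : ι → ℝ, g (φ x) * rexp (-B φ φ) = c * ∫ t, g t * rexp (-l * t ^ 2) := by
  obtain ⟨l, c, hl1, hl2, hm⟩ := exists_marginal B hC hB hsymm x hK
  refine ⟨l, c, hl1, hl2, fun g hg => ?_⟩
  have hmB : Measurable fun φ : ι → ℝ => B φ φ := (bil_cont B).measurable
  have hD : Measurable fun φ : ι → ℝ => ENNReal.ofReal (rexp (-B φ φ)) := by fun_prop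
  have hE : Measurable fun t : ℝ => ENNReal.ofReal (rexp (-l * t ^ 2)) := by fun_prop
  have hmeas : (volume.withDensity (fun φ : ι → ℝ => ENNReal.ofReal (rexp (-B φ φ)))).map
      (fun φ => φ x) = c • volume.withDensity (fun t : ℝ => ENNReal.ofReal (rexp (-l * t ^ 2))) := by
    ext S hS
    have h1 := hm (S.indicator 1) (measurable_one.indicator hS)
    rw [Measure.map_apply (measurable_pi_apply x) hS, Measure.smul_apply, withDensity_apply _ hS,
      withDensity_apply _ (measurable_pi_apply x hS), ENNReal.smul_def, smul_eq_mul,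
      ← lintegral_indicator hS, ← lintegral_indicator (measurable_pi_apply x hS)]
    have e1 : ∀ φ : ι → ℝ, ((fun φ : ι → ℝ => φ x) ⁻¹' S).indicator
        (fun φ => ENNReal.ofReal (rexp (-B φ φ))) φ =
        S.indicator 1 (φ x) * ENNReal.ofReal (rexp (-B φ φ)) := by
      intro φ
      by_cases h : φ x ∈ S
      · rw [Set.indicator_of_mem (by exact h), Set.indicator_of_mem h, Pi.one_apply, one_mul]
      · rw [Set.indicator_of_notMem (by exact h), Set.indicator_of_notMem h, zero_mul]
    have e2 : ∀ t : ℝ, S.indicator (fun t => ENNReal.ofReal (rexp (-l * t ^ 2))) t =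
        S.indicator 1 t * ENNReal.ofReal (rexp (-l * t ^ 2)) := by
      intro t
      by_cases h : t ∈ S
      · rw [Set.indicator_of_mem h, Set.indicator_of_mem h, Pi.one_apply, one_mul]
      · rw [Set.indicator_of_notMem h, Set.indicator_of_notMem h, zero_mul]
    rw [lintegral_congr e1, lintegral_congr e2]
    exact h1
  have h2 : ∫ t, g t ∂((volume.withDensity (fun φ : ι → ℝ => ENNReal.ofReal (rexp (-B φ φ)))).map
      (fun φ => φ x)) = ∫ t, g t ∂(c • volume.withDensity
        (fun t : ℝ => ENNReal.ofReal (rexp (-l * t ^ 2)))) := by rw [hmeas]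
  rw [integral_map (measurable_pi_apply x).aemeasurable hg.aestronglyMeasurable,
    integral_smul_nnreal_measure,
    integral_withDensity_eq_integral_toReal_smul hD (by simp),
    integral_withDensity_eq_integral_toReal_smul hE (by simp)] at h2
  simp only [ENNReal.toReal_ofReal (exp_pos _).le, smul_eq_mul, NNReal.smul_def] at h2
  simpa only [mul_comm] using h2

end Abstract

/-- Logarithmic weight of a single site. -/
noncomputable def gfun (a b p t : ℝ) : ℝ :=
  (if 0 ≤ t then Real.log (1 - p) else Real.log p) + b * (if t ∈ Set.Icc 0 a then (1 : ℝ) else 0)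

lemma gfun_measurable (a b p : ℝ) : Measurable (gfun a b p) := by
  unfold gfun
  refine Measurable.add ?_ (Measurable.const_mul ?_ _)
  · exact Measurable.ite measurableSet_Ici measurable_const measurable_const
  · exact Measurable.ite measurableSet_Icc measurable_const measurable_const

lemma gfun_bound (a b p t : ℝ) : |gfun a b p t| ≤ |Real.log (1 - p)| + |Real.log p| + |b| := by
  unfold gfun
  have h1 := abs_nonneg (Real.log (1 - p))
  have h2 := abs_nonneg (Real.log p)
  have h3 := abs_nonneg b
  split_ifs <;> simp only [mul_one, mul_zero, add_zero] <;>
    first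
    | linarith
    | (refine (abs_add_le _ _).trans ?_; linarith)

lemma exists_h {a b l0 K S : ℝ} (ha : 0 < a) (hb : 0 < b) (hl0 : 0 < l0) (hK : 0 < K) (hS : 0 ≤ S) :
    ∃ h : ℝ, a ≤ h ∧ 1 ≤ h ∧
      (K * h + 1) / (2 * l0) + 2 * S + 1 ≤ b * (a / 2) * rexp (l0 * h * a / 2) := by
  set A := b * (a / 2) * (l0 * a / 2) ^ 2 / 2 with hA
  set B := K / (2 * l0) with hB
  set D := 1 / (2 * l0) + 2 * S + 1 with hD
  have hApos : 0 < A := by positivity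
  have hBpos : 0 < B := by positivity
  have hDpos : 0 < D := by positivity
  have hq : 0 < (B + D) / A := by positivity
  refine ⟨a + 1 + (B + D) / A, by linarith, by linarith, ?_⟩
  set h := a + 1 + (B + D) / A with hh
  have hpos : 1 ≤ h := by linarith
  have h1 := Real.quadratic_le_exp_of_nonneg (x := l0 * h * a / 2) (by positivity)
  have h2 : (l0 * h * a / 2) ^ 2 / 2 ≤ rexp (l0 * h * a / 2) := by
    have : 0 ≤ l0 * h * a / 2 := by positivity
    linarith
  have h3 : A * h ^ 2 ≤ b * (a / 2) * rexp (l0 * h * a / 2) := by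
    calc A * h ^ 2 = b * (a / 2) * ((l0 * h * a / 2) ^ 2 / 2) := by rw [hA]; ring
      _ ≤ _ := by gcongr
  have h4 : B + D ≤ A * h := by
    have : (B + D) / A ≤ h := by linarith
    rw [div_le_iff₀ hApos] at this
    linarith
  have h5 : (B + D) * h ≤ A * h ^ 2 := by nlinarith
  have h6 : (K * h + 1) / (2 * l0) + 2 * S + 1 = B * h + D := by
    rw [hB, hD]; field_simp; ring
  rw [h6]
  nlinarith

lemma oneD {a b l0 K : ℝ} (ha : 0 < a) (hb : 0 < b) (hl0 : 0 < l0) (hK : 0 < K) :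
    ∃ h p c : ℝ, 0 < h ∧ 0 < p ∧ p < 1 ∧ 0 < c ∧ ∀ l, l0 ≤ l → l ≤ K →
      c * ∫ t, rexp (-l * t ^ 2) ≤ ∫ t, gfun a b p (t + h) * rexp (-l * t ^ 2) := by
  set S := √(π / l0) with hS
  have hSpos : 0 < S := by rw [hS]; positivity
  obtain ⟨h, hah, h1h, hh⟩ := exists_h ha hb hl0 hK hSpos.le
  have hpos : 0 < h := by linarith
  set p := rexp (-(K * h ^ 2 + h)) with hp
  have hp0 : 0 < p := exp_pos _
  have hp2 : p ≤ 1 / 2 := by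
    calc p ≤ rexp (-h) := by
          rw [hp, exp_le_exp]
          have : 0 ≤ K * h ^ 2 := by positivity
          linarith
      _ ≤ 1 / 2 := by
          rw [Real.exp_neg, inv_le_comm₀ (exp_pos _) (by norm_num)]
          have := Real.add_one_le_exp h
          norm_num; linarith
  have hlogp : Real.log p = -(K * h ^ 2 + h) := by rw [hp, Real.log_exp]
  have hlog1 : -(2 * p) ≤ Real.log (1 - p) := by
    have := Real.one_sub_inv_le_log_of_pos (x := 1 - p) (by linarith)
    refine le_trans ?_ this
    have h3 : (1 - p)⁻¹ ≤ 1 + 2 * p := by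
      rw [inv_le_iff_one_le_mul₀ (by linarith)]
      nlinarith
    linarith
  have hlog1' : Real.log (1 - p) ≤ 0 := Real.log_nonpos (by linarith) (by linarith)
  refine ⟨h, p, rexp (-(K * h ^ 2)) / S, hpos, hp0, by linarith, by positivity, ?_⟩
  intro l hl hlK
  have hlpos : 0 < l := by linarith
  have hE : Integrable fun t : ℝ => rexp (-l * t ^ 2) := integrable_exp_neg_mul_sq hlpos
  have hint : ∫ t, rexp (-l * t ^ 2) ≤ S := by
    rw [integral_gaussian, hS]
    gcongr
  set m := rexp (-(l * h ^ 2) + l * h * a / 2) with hm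
  -- pointwise lower bound
  have hexp : IntegrableOn (fun t : ℝ => rexp ((2 * l * h) * t)) (Set.Iic (-h)) :=
    integrableOn_exp_mul_Iic (by positivity) _
  set I1 : ℝ → ℝ := (Set.Icc (-h + a / 2) (a - h)).indicator (fun _ => b * m) with hI1
  set I2 : ℝ → ℝ := (Set.Iic (-h)).indicator
    (fun t => Real.log p * rexp (l * h ^ 2) * rexp ((2 * l * h) * t)) with hI2
  set I3 : ℝ → ℝ := fun t => Real.log (1 - p) * rexp (-l * t ^ 2) with hI3
  have i1 : Integrable I1 := by
    rw [hI1, integrable_indicator_iff measurableSet_Icc]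
    exact integrableOn_const (by simp)
  have i2 : Integrable I2 := by
    rw [hI2, integrable_indicator_iff measurableSet_Iic]
    exact hexp.const_mul _
  have i3 : Integrable I3 := hE.const_mul _
  have hG : Integrable fun t => gfun a b p (t + h) * rexp (-l * t ^ 2) := by
    refine hE.bdd_mul (c := |Real.log (1 - p)| + |Real.log p| + |b|)
      ((gfun_measurable a b p).comp (measurable_add_const h)).aestronglyMeasurable
      (Filter.Eventually.of_forall fun t => gfun_bound a b p (t + h))
  have hle : ∀ t, I1 t + I2 t + I3 t ≤ gfun a b p (t + h) * rexp (-l * t ^ 2) := by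
    intro t
    have hEpos := exp_pos (-l * t ^ 2)
    have e1 : I1 t ≤ (b * (if t + h ∈ Set.Icc 0 a then (1 : ℝ) else 0)) * rexp (-l * t ^ 2) := by
      by_cases ht : t ∈ Set.Icc (-h + a / 2) (a - h)
      · have ht2 : t + h ∈ Set.Icc 0 a := ⟨by linarith [ht.1], by linarith [ht.2]⟩
        rw [hI1, Set.indicator_of_mem ht, if_pos ht2, mul_one]
        gcongr
        rw [hm, exp_le_exp]
        obtain ⟨h1, h2⟩ := ht
        have h3 : t ^ 2 ≤ (h - a / 2) ^ 2 := by
          apply sq_le_sq'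
          · linarith
          · linarith
        have h4 : (h - a / 2) ^ 2 ≤ h ^ 2 - h * a / 2 := by nlinarith
        have h5 : l * t ^ 2 ≤ l * (h ^ 2 - h * a / 2) := by gcongr; linarith
        nlinarith
      · rw [hI1, Set.indicator_of_notMem ht]
        split_ifs <;> positivity
    have e2 : I2 t + I3 t ≤
        (if 0 ≤ t + h then Real.log (1 - p) else Real.log p) * rexp (-l * t ^ 2) := by
      have hlp : Real.log p ≤ 0 := Real.log_nonpos hp0.le (by linarith)
      by_cases ht : t ∈ Set.Iic (-h)
      · have f1 : rexp (-l * t ^ 2) ≤ rexp (l * h ^ 2) * rexp ((2 * l * h) * t) := by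
          rw [← Real.exp_add, exp_le_exp]
          nlinarith [mul_nonneg hlpos.le (sq_nonneg (t + h))]
        have f2 : I2 t ≤ Real.log p * rexp (-l * t ^ 2) := by
          rw [hI2, Set.indicator_of_mem ht, mul_assoc]
          exact mul_le_mul_of_nonpos_left f1 hlp
        have f3 : I3 t ≤ 0 := mul_nonpos_of_nonpos_of_nonneg hlog1' hEpos.le
        have f4 : I2 t ≤ 0 := f2.trans (mul_nonpos_of_nonpos_of_nonneg hlp hEpos.le)
        split_ifs
        · simp only [hI3]; linarith
        · linarith
      · have : 0 ≤ t + h := by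
          rw [Set.mem_Iic, not_le] at ht; linarith
        rw [if_pos this, hI2, Set.indicator_of_notMem ht, zero_add]
    unfold gfun
    rw [add_mul]
    linarith
  have hmono := integral_mono ((i1.add i2).add i3) hG hle
  refine le_trans ?_ hmono
  have s1 : ∫ t, (I1 + I2 + I3) t = (∫ t, I1 t) + (∫ t, I2 t) + ∫ t, I3 t := by
    rw [integral_add' (i1.add i2) i3, integral_add' i1 i2]
  rw [s1]
  have v1 : ∫ t, I1 t = b * m * (a / 2) := by
    rw [hI1, integral_indicator measurableSet_Icc, setIntegral_const, Real.volume_real_Icc_of_le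
      (by linarith)]
    simp only [smul_eq_mul]; ring
  have v2 : ∫ t, I2 t = Real.log p * (rexp (-(l * h ^ 2)) / (2 * l * h)) := by
    rw [hI2, integral_indicator measurableSet_Iic, integral_const_mul,
      integral_exp_mul_Iic (by positivity)]
    have : rexp (-(l * h ^ 2)) = rexp (l * h ^ 2) * rexp (2 * l * h * -h) := by
      rw [← Real.exp_add]; congr 1; ring
    rw [this]; ring
  have v3 : -(2 * p) * S ≤ ∫ t, I3 t := by
    rw [hI3, integral_const_mul]
    have h0 : 0 ≤ ∫ t, rexp (-l * t ^ 2) := integral_nonneg fun t => (exp_pos _).le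
    nlinarith
  set E0 := rexp (-(l * h ^ 2)) with hE0
  have hE0pos : 0 < E0 := exp_pos _
  have hE0K : rexp (-(K * h ^ 2)) ≤ E0 := by
    rw [hE0, exp_le_exp]
    have : l * h ^ 2 ≤ K * h ^ 2 := by gcongr
    linarith
  have w1 : E0 * (b * (a / 2) * rexp (l0 * h * a / 2)) ≤ b * m * (a / 2) := by
    have : m = E0 * rexp (l * h * a / 2) := by rw [hm, hE0, ← Real.exp_add]
    rw [this]
    have h2 : rexp (l0 * h * a / 2) ≤ rexp (l * h * a / 2) := by gcongr
    calc _ = b * (E0 * rexp (l0 * h * a / 2)) * (a / 2) := by ring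
      _ ≤ _ := by gcongr
  have w2 : -(E0 * ((K * h + 1) / (2 * l0))) ≤ Real.log p * (E0 / (2 * l * h)) := by
    rw [hlogp]
    have : -(K * h ^ 2 + h) * (E0 / (2 * l * h)) = -(E0 * ((K * h + 1) / (2 * l))) := by
      field_simp
    rw [this]
    gcongr
  have w3 : -(E0 * (2 * S)) ≤ -(2 * p) * S := by
    have : p ≤ E0 := by
      refine le_trans ?_ hE0K
      rw [hp, exp_le_exp]; linarith
    nlinarith
  have w4 : rexp (-(K * h ^ 2)) / S * ∫ t, rexp (-l * t ^ 2) ≤ E0 := by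
    calc _ ≤ rexp (-(K * h ^ 2)) / S * S := by gcongr
      _ = rexp (-(K * h ^ 2)) := by field_simp
      _ ≤ E0 := hE0K
  have w5 : E0 * ((K * h + 1) / (2 * l0) + 2 * S + 1) ≤
      E0 * (b * (a / 2) * rexp (l0 * h * a / 2)) := by gcongr
  rw [v1, v2]
  nlinarith

section Abstract2

variable {ι : Type*} [Fintype ι]

/-- Folding identity: symmetric weights integrate like the uniform ones. -/
lemma fold_aux [DecidableEq ι] (w : ℝ → ENNReal) (hw : Measurable w)
    (hw1 : ∀ t, t ≠ 0 → w t + w (-t) = 1)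
    (F : (ι → ℝ) → ENNReal) (hF : Measurable F) :
    (2 : ENNReal) ^ Fintype.card ι * ∫⁻ φ : ι → ℝ, (∏ x, w (φ x)) * F (fun x => |φ x|) =
      ∫⁻ φ : ι → ℝ, F (fun x => |φ x|) := by
  have habs : Measurable fun φ : ι → ℝ => F (fun x => |φ x|) :=
    hF.comp (measurable_pi_lambda _ fun x => (measurable_pi_apply x).abs)
  let sg : Bool → ℝ → ℝ := fun s t => if s then t else -t
  have hsg : ∀ s, MeasurePreserving (sg s) volume volume := by
    intro s
    cases s
    · simpa [sg] using Measure.measurePreserving_neg (volume : Measure ℝ)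
    · have e : sg true = id := by ext t; simp [sg]
      rw [e]
      exact MeasurePreserving.id _
  have hT : ∀ σ : ι → Bool, ∫⁻ φ : ι → ℝ, (∏ x, w (φ x)) * F (fun x => |φ x|) =
      ∫⁻ φ : ι → ℝ, (∏ x, w (sg (σ x) (φ x))) * F (fun x => |φ x|) := by
    intro σ
    have hmp : MeasurePreserving (fun (φ : ι → ℝ) (x : ι) => sg (σ x) (φ x)) :=
      volume_preserving_pi fun x => hsg (σ x)
    have hm : Measurable fun φ : ι → ℝ => (∏ x, w (φ x)) * F (fun x => |φ x|) := by
      refine Measurable.mul ?_ habs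
      exact Finset.measurable_prod _ fun x _ => hw.comp (measurable_pi_apply x)
    rw [← hmp.lintegral_comp hm]
    refine lintegral_congr fun φ => ?_
    congr 2
    ext x
    by_cases h : σ x <;> simp [sg, h]
  have hsum : ∑ _σ : ι → Bool, ∫⁻ φ : ι → ℝ, (∏ x, w (φ x)) * F (fun x => |φ x|) =
      (2 : ENNReal) ^ Fintype.card ι * ∫⁻ φ : ι → ℝ, (∏ x, w (φ x)) * F (fun x => |φ x|) := by
    simp
  rw [← hsum, Finset.sum_congr rfl fun σ _ => hT σ, ← lintegral_finsetSum]
  · refine lintegral_congr_ae ?_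
    have hae : ∀ᵐ φ : ι → ℝ, ∀ x, φ x ≠ 0 := by
      rw [MeasureTheory.ae_all_iff]
      intro x
      exact Measure.ae_eval_ne (fun _ : ι => (volume : Measure ℝ)) x 0
    filter_upwards [hae] with φ hφ
    rw [← Finset.sum_mul]
    have h1 : ∑ σ : ι → Bool, ∏ x, w (sg (σ x) (φ x)) = ∏ x, ∑ s : Bool, w (sg s (φ x)) := by
      rw [Finset.prod_univ_sum, Fintype.piFinset_univ]
    rw [h1, Finset.prod_eq_one, one_mul]
    intro x _
    simp [sg, hw1 _ (hφ x)]
  · intro σ _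
    refine Measurable.mul ?_ habs
    exact Finset.measurable_prod _ fun x _ =>
      hw.comp ((hsg (σ x)).measurable.comp (measurable_pi_apply x))

lemma fold_eq [DecidableEq ι] {p : ℝ} (hp0 : 0 < p) (hp1 : p < 1)
    (F : (ι → ℝ) → ENNReal) (hF : Measurable F) :
    ∫⁻ φ in {φ : ι → ℝ | ∀ x, 0 ≤ φ x}, F φ =
      ∫⁻ φ : ι → ℝ, (∏ x, ENNReal.ofReal (if 0 ≤ φ x then 1 - p else p)) *
        F (fun x => |φ x|) := by
  have hS : MeasurableSet {φ : ι → ℝ | ∀ x, 0 ≤ φ x} := by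
    rw [Set.ofPred_forall]
    exact MeasurableSet.iInter fun x => measurableSet_le measurable_const (measurable_pi_apply x)
  have h1 := fold_aux (ι := ι) (fun t => ENNReal.ofReal (if 0 ≤ t then 1 - p else p))
    (Measurable.ennreal_ofReal (Measurable.ite measurableSet_Ici measurable_const measurable_const))
    (by
      intro t ht
      rw [← ENNReal.ofReal_add (by split_ifs <;> linarith) (by split_ifs <;> linarith)]
      rcases lt_or_gt_of_ne ht with h | h
      · rw [if_neg (by linarith), if_pos (by linarith)]; simp
      · rw [if_pos (by linarith), if_neg (by linarith)]; simp) F hF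
  have h2 := fold_aux (ι := ι) (fun t => if 0 ≤ t then 1 else 0)
    (Measurable.ite measurableSet_Ici measurable_const measurable_const)
    (by
      intro t ht
      rcases lt_or_gt_of_ne ht with h | h
      · rw [if_neg (by linarith), if_pos (by linarith)]; simp
      · rw [if_pos (by linarith), if_neg (by linarith)]; simp) F hF
  have h3 : ∫⁻ φ in {φ : ι → ℝ | ∀ x, 0 ≤ φ x}, F φ =
      ∫⁻ φ : ι → ℝ, (∏ x, if 0 ≤ φ x then 1 else 0) * F (fun x => |φ x|) := by
    rw [← lintegral_indicator hS]
    refine lintegral_congr fun φ => ?_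
    by_cases hφ : ∀ x, 0 ≤ φ x
    · rw [Set.indicator_of_mem (by exact hφ), Finset.prod_eq_one (fun x _ => if_pos (hφ x)), one_mul]
      congr 1
      ext x
      exact (abs_of_nonneg (hφ x)).symm
    · rw [Set.indicator_of_notMem (by exact hφ)]
      push Not at hφ
      obtain ⟨x, hx⟩ := hφ
      rw [Finset.prod_eq_zero (Finset.mem_univ x) (if_neg (not_le.2 hx)), zero_mul]
  rw [h3]
  have h4 : (2 : ENNReal) ^ Fintype.card ι ≠ 0 := by simp
  have h5 : (2 : ENNReal) ^ Fintype.card ι ≠ ⊤ := by simp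
  exact (ENNReal.mul_right_inj h4 h5).1 (h2.trans h1.symm)

lemma ofReal_integral_le {α : Type*} [MeasurableSpace α] {μ : Measure α} {f : α → ℝ}
    (hf : Integrable f μ) : ENNReal.ofReal (∫ x, f x ∂μ) ≤ ∫⁻ x, ENNReal.ofReal (f x) ∂μ := by
  have h1 : ∫ x, f x ∂μ ≤ ∫ x, max (f x) 0 ∂μ :=
    integral_mono hf hf.pos_part fun x => le_max_left _ _
  refine (ENNReal.ofReal_le_ofReal h1).trans ?_
  rw [ofReal_integral_eq_lintegral_ofReal hf.pos_part
    (Filter.Eventually.of_forall fun x => le_max_right _ _)]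
  refine lintegral_mono fun x => ?_
  simp [ENNReal.ofReal_max]

lemma integral_lin (B : (ι → ℝ) →ₗ[ℝ] (ι → ℝ) →ₗ[ℝ] ℝ) (v : ι → ℝ) :
    ∫ φ : ι → ℝ, B φ v * rexp (-B φ φ) = 0 := by
  have h := integral_neg_eq_self (fun φ : ι → ℝ => B φ v * rexp (-B φ φ)) volume
  simp only [map_neg, LinearMap.neg_apply, neg_neg, neg_mul, integral_neg] at h
  linarith

lemma integrable_lin (B : (ι → ℝ) →ₗ[ℝ] (ι → ℝ) →ₗ[ℝ] ℝ) {C : ℝ} (hC : 0 < C)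
    (hB : ∀ φ x, φ x ^ 2 ≤ C * B φ φ) (v : ι → ℝ) :
    Integrable fun φ : ι → ℝ => B φ v * rexp (-B φ φ) := by
  classical
  have h : ∀ φ : ι → ℝ, B φ v = ∑ x, B (Pi.single x 1) v * φ x := by
    intro φ
    have := LinearMap.pi_apply_eq_sum_univ (B.flip v) φ
    simp only [LinearMap.flip_apply, smul_eq_mul] at this
    rw [this]
    refine Finset.sum_congr rfl fun x _ => ?_
    rw [mul_comm]
    congr 3
    ext y
    simp [Pi.single_apply, eq_comm]
  have h2 : (fun φ : ι → ℝ => B φ v * rexp (-B φ φ)) =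
      fun φ => ∑ x, B (Pi.single x 1) v * (φ x * rexp (-B φ φ)) := by
    ext φ
    rw [h φ, Finset.sum_mul]
    exact Finset.sum_congr rfl fun x _ => by ring
  rw [h2]
  exact integrable_finsetSum _ fun x _ => (bil_integrable_coord B hC hB x).const_mul _

end Abstract2

lemma main_abs {a b C K : ℝ} (ha : 0 < a) (hb : 0 < b) (hC : 0 < C) (hK : 0 < K) :
    ∃ h c : ℝ, 0 < c ∧ ∀ (ι : Type) [Fintype ι] [DecidableEq ι]
      (B : (ι → ℝ) →ₗ[ℝ] (ι → ℝ) →ₗ[ℝ] ℝ),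
      (∀ φ x, φ x ^ 2 ≤ C * B φ φ) → (∀ φ ψ, B φ ψ = B ψ φ) →
      (∀ x, B (Pi.single x 1) (Pi.single x 1) ≤ K) →
      (∀ φ, B (fun x => |φ x|) (fun x => |φ x|) ≤ B φ φ) →
      ENNReal.ofReal ((∫ φ, rexp (-B φ φ)) *
        rexp (c * Fintype.card ι - h ^ 2 * B (fun _ => 1) (fun _ => 1))) ≤
      ∫⁻ φ in {φ : ι → ℝ | ∀ x, 0 ≤ φ x},
        ENNReal.ofReal (rexp (-B φ φ + b * ∑ x, (if φ x ∈ Set.Icc 0 a then (1 : ℝ) else 0))) := by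
  obtain ⟨h, p, c, hh, hp0, hp1, hc, hone⟩ := oneD ha hb (one_div_pos.2 hC) hK
  refine ⟨h, c, hc, ?_⟩
  intro ι _ _ B hB hsymm hBK habs
  have hmB : Measurable fun φ : ι → ℝ => B φ φ := (bil_cont B).measurable
  have hmI : Measurable fun φ : ι → ℝ => ∑ x, (if φ x ∈ Set.Icc 0 a then (1 : ℝ) else 0) := by
    refine Finset.measurable_sum _ fun x _ => ?_
    exact Measurable.ite (measurable_pi_apply x measurableSet_Icc) measurable_const measurable_const
  rw [fold_eq hp0 hp1 _ (by fun_prop)]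
  have hZ : Integrable fun φ : ι → ℝ => rexp (-B φ φ) := by
    simpa using bil_integrable B hC hB one_pos
  set Z := ∫ φ : ι → ℝ, rexp (-B φ φ) with hZdef
  -- step 1: drop the absolute values
  have s1 : ∫⁻ φ : ι → ℝ, ENNReal.ofReal (rexp (∑ x, gfun a b p (φ x) - B φ φ)) ≤
      ∫⁻ φ : ι → ℝ, (∏ x, ENNReal.ofReal (if 0 ≤ φ x then 1 - p else p)) *
        ENNReal.ofReal (rexp (-B (fun x => |φ x|) (fun x => |φ x|) +
          b * ∑ x, (if |φ x| ∈ Set.Icc 0 a then (1 : ℝ) else 0))) := by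
    refine lintegral_mono fun φ => ?_
    have e1 : ∀ x, ENNReal.ofReal (if 0 ≤ φ x then 1 - p else p) =
        ENNReal.ofReal (rexp (if 0 ≤ φ x then Real.log (1 - p) else Real.log p)) := by
      intro x
      split_ifs
      · rw [Real.exp_log (by linarith)]
      · rw [Real.exp_log hp0]
    simp only [e1]
    rw [← ENNReal.ofReal_prod_of_nonneg (fun _ _ => (exp_pos _).le), ← Real.exp_sum,
      ← ENNReal.ofReal_mul (exp_pos _).le, ← Real.exp_add]
    apply ENNReal.ofReal_le_ofReal
    rw [exp_le_exp]
    unfold gfun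
    rw [Finset.sum_add_distrib, ← Finset.mul_sum]
    have e2 : ∑ x, (if φ x ∈ Set.Icc 0 a then (1 : ℝ) else 0) ≤
        ∑ x, (if |φ x| ∈ Set.Icc 0 a then (1 : ℝ) else 0) := by
      refine Finset.sum_le_sum fun x _ => ?_
      by_cases hx : φ x ∈ Set.Icc 0 a
      · rw [if_pos hx, abs_of_nonneg hx.1, if_pos hx]
      · rw [if_neg hx]; split_ifs <;> norm_num
    have e3 := mul_le_mul_of_nonneg_left e2 hb.le
    have e4 := habs φ
    linarith
  refine le_trans ?_ s1
  -- step 2: shift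
  rw [← lintegral_add_right_eq_self _ (fun _ : ι => h)]
  set one : ι → ℝ := fun _ => 1 with hone1
  have hshift : (fun _ : ι => h) = h • one := by ext x; simp [hone1]
  set m : ℝ := c * Fintype.card ι - h ^ 2 * B one one with hm
  set Y : (ι → ℝ) → ℝ := fun φ => ∑ x, gfun a b p (φ x + h) - 2 * h * B φ one - h ^ 2 * B one one
    with hY
  have s2 : ∀ φ : ι → ℝ, ENNReal.ofReal (rexp m * ((1 - m) * rexp (-B φ φ) + Y φ * rexp (-B φ φ))) ≤
      ENNReal.ofReal (rexp (∑ x, gfun a b p ((φ + (fun _ : ι => h) : ι → ℝ) x) -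
        B (φ + (fun _ : ι => h)) (φ + (fun _ : ι => h)))) := by
    intro φ
    apply ENNReal.ofReal_le_ofReal
    have e1 : ∑ x, gfun a b p ((φ + (fun _ : ι => h) : ι → ℝ) x) - B (φ + (fun _ : ι => h)) (φ + (fun _ : ι => h)) =
        Y φ + -B φ φ := by
      rw [hshift]
      simp only [map_add, map_smul, LinearMap.add_apply, LinearMap.smul_apply, smul_eq_mul, hY,
        hsymm one φ, Pi.add_apply, Pi.smul_apply]
      simp only [hone1, mul_one]
      ring
    rw [e1, Real.exp_add]
    have e2 : rexp m * (1 + (Y φ - m)) ≤ rexp (Y φ) := by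
      have := Real.add_one_le_exp (Y φ - m)
      calc rexp m * (1 + (Y φ - m)) ≤ rexp m * rexp (Y φ - m) := by gcongr; linarith
        _ = rexp (Y φ) := by rw [← Real.exp_add]; congr 1; ring
    calc _ = (rexp m * (1 + (Y φ - m))) * rexp (-B φ φ) := by ring
      _ ≤ _ := by gcongr
  refine le_trans ?_ (lintegral_mono s2)
  -- integrability
  have hGi : ∀ x, Integrable fun φ : ι → ℝ => gfun a b p (φ x + h) * rexp (-B φ φ) := by
    intro x
    have hmx : Measurable fun φ : ι → ℝ => φ x + h := by fun_prop
    refine hZ.bdd_mul (c := |Real.log (1 - p)| + |Real.log p| + |b|)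
      ((gfun_measurable a b p).comp hmx).aestronglyMeasurable
      (Filter.Eventually.of_forall fun φ => gfun_bound a b p (φ x + h))
  have hLi := integrable_lin B hC hB one
  have hYeq : (fun φ => Y φ * rexp (-B φ φ)) = fun φ =>
      (∑ x, gfun a b p (φ x + h) * rexp (-B φ φ)) - 2 * h * (B φ one * rexp (-B φ φ)) -
        h ^ 2 * B one one * rexp (-B φ φ) := by
    ext φ
    rw [← Finset.sum_mul]
    simp only [hY]; ring
  have hSi : Integrable fun φ : ι → ℝ => ∑ x, gfun a b p (φ x + h) * rexp (-B φ φ) :=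
    integrable_finsetSum _ fun x _ => hGi x
  have hYi : Integrable fun φ => Y φ * rexp (-B φ φ) := by
    rw [hYeq]
    exact (hSi.sub (hLi.const_mul _)).sub (hZ.const_mul _)
  have hYint : m * Z ≤ ∫ φ, Y φ * rexp (-B φ φ) := by
    have hSL : Integrable fun φ : ι → ℝ => (∑ x, gfun a b p (φ x + h) * rexp (-B φ φ)) -
        2 * h * (B φ one * rexp (-B φ φ)) := hSi.sub (hLi.const_mul _)
    rw [hYeq, integral_sub hSL (hZ.const_mul _),
      integral_sub hSi (hLi.const_mul _), integral_const_mul, integral_const_mul, integral_lin,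
      integral_finsetSum _ fun x _ => hGi x, ← hZdef]
    have : ∀ x : ι, c * Z ≤ ∫ φ : ι → ℝ, gfun a b p (φ x + h) * rexp (-B φ φ) := by
      intro x
      obtain ⟨l, k, hl1, hl2, hmar⟩ := exists_marginal_real B hC hB hsymm x (hBK x)
      rw [hmar (fun t => gfun a b p (t + h))
        ((gfun_measurable a b p).comp (measurable_add_const h))]
      have h1 := hmar (fun _ => 1) measurable_const
      simp only [one_mul] at h1
      rw [hZdef, h1]
      have h2 := hone l hl1 hl2
      have h3 := mul_le_mul_of_nonneg_left h2 k.coe_nonneg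
      linarith
    have h4 : ∑ _x : ι, c * Z ≤ ∑ x, ∫ φ : ι → ℝ, gfun a b p (φ x + h) * rexp (-B φ φ) :=
      Finset.sum_le_sum fun x _ => this x
    simp only [Finset.sum_const, Finset.card_univ, nsmul_eq_mul] at h4
    rw [hm]
    nlinarith
  refine le_trans ?_ (ofReal_integral_le (((hZ.const_mul (1 - m)).add hYi).const_mul (rexp m)))
  apply ENNReal.ofReal_le_ofReal
  rw [integral_const_mul, integral_add (hZ.const_mul (1 - m)) hYi, integral_const_mul, ← hZdef]
  rw [mul_comm]
  gcongr
  linarith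

lemma extz_add {d : ℕ} (A : Finset (Fin d → ℤ)) (φ ψ : A → ℝ) (x : Fin d → ℤ) :
    extz A (φ + ψ) x = extz A φ x + extz A ψ x := by
  unfold extz; split_ifs <;> simp

lemma extz_smul {d : ℕ} (A : Finset (Fin d → ℤ)) (c : ℝ) (ψ : A → ℝ) (x : Fin d → ℤ) :
    extz A (c • ψ) x = c * extz A ψ x := by
  unfold extz; split_ifs <;> simp

lemma extz_abs {d : ℕ} (A : Finset (Fin d → ℤ)) (ψ : A → ℝ) (x : Fin d → ℤ) :
    extz A (fun y => |ψ y|) x = |extz A ψ x| := by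
  unfold extz; split_ifs <;> simp

lemma extz_of_notMem {d : ℕ} (A : Finset (Fin d → ℤ)) (ψ : A → ℝ) (x : Fin d → ℤ) (h : x ∉ A) :
    extz A ψ x = 0 := by
  unfold extz; rw [dif_neg h]

/-- The bilinear form of the Hamiltonian. -/
noncomputable def hamBil (d : ℕ) (A : Finset (Fin d → ℤ)) : (A → ℝ) →ₗ[ℝ] (A → ℝ) →ₗ[ℝ] ℝ :=
  LinearMap.mk₂ ℝ (fun ψ η => (1 / (8 * d)) * ∑ x ∈ A ∪ bdry d A, ∑ y ∈ A ∪ bdry d A,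
    if y ∈ nbrs d x then (extz A ψ x - extz A ψ y) * (extz A η x - extz A η y) else 0)
    (by
      intro f g k
      rw [← mul_add, ← Finset.sum_add_distrib]
      congr 1
      refine Finset.sum_congr rfl fun x _ => ?_
      rw [← Finset.sum_add_distrib]
      refine Finset.sum_congr rfl fun y _ => ?_
      split_ifs
      · rw [extz_add, extz_add]; ring
      · simp)
    (by
      intro c f g
      rw [smul_eq_mul, mul_left_comm c]
      congr 1
      rw [Finset.mul_sum]
      refine Finset.sum_congr rfl fun x _ => ?_
      rw [Finset.mul_sum]
      refine Finset.sum_congr rfl fun y _ => ?_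
      split_ifs
      · rw [extz_smul, extz_smul]; ring
      · simp)
    (by
      intro f g k
      rw [← mul_add, ← Finset.sum_add_distrib]
      congr 1
      refine Finset.sum_congr rfl fun x _ => ?_
      rw [← Finset.sum_add_distrib]
      refine Finset.sum_congr rfl fun y _ => ?_
      split_ifs
      · rw [extz_add, extz_add]; ring
      · simp)
    (by
      intro c f g
      rw [smul_eq_mul, mul_left_comm c]
      congr 1
      rw [Finset.mul_sum]
      refine Finset.sum_congr rfl fun x _ => ?_
      rw [Finset.mul_sum]
      refine Finset.sum_congr rfl fun y _ => ?_
      split_ifs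
      · rw [extz_smul, extz_smul]; ring
      · simp)

lemma hamBil_apply (d : ℕ) (A : Finset (Fin d → ℤ)) (ψ η : A → ℝ) :
    hamBil d A ψ η = (1 / (8 * d)) * ∑ x ∈ A ∪ bdry d A, ∑ y ∈ A ∪ bdry d A,
      if y ∈ nbrs d x then (extz A ψ x - extz A ψ y) * (extz A η x - extz A η y) else 0 := rfl

lemma hamBil_self (d : ℕ) (A : Finset (Fin d → ℤ)) (ψ : A → ℝ) :
    hamBil d A ψ ψ = ham d A (extz A ψ) := by
  rw [hamBil_apply, ham]
  simp only [sq]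

lemma hamBil_symm (d : ℕ) (A : Finset (Fin d → ℤ)) (ψ η : A → ℝ) :
    hamBil d A ψ η = hamBil d A η ψ := by
  rw [hamBil_apply, hamBil_apply]
  simp only [mul_comm (extz A ψ _ - extz A ψ _)]

lemma hamBil_abs (d : ℕ) (A : Finset (Fin d → ℤ)) (ψ : A → ℝ) :
    hamBil d A (fun x => |ψ x|) (fun x => |ψ x|) ≤ hamBil d A ψ ψ := by
  rw [hamBil_self, hamBil_self, ham, ham]
  refine mul_le_mul_of_nonneg_left ?_ (by positivity)
  refine Finset.sum_le_sum fun x _ => Finset.sum_le_sum fun y _ => ?_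
  split_ifs
  · rw [extz_abs, extz_abs]
    exact sq_le_sq.2 (abs_abs_sub_abs_le _ _)
  · exact le_rfl

lemma card_nbrs_le (d : ℕ) (x : Fin d → ℤ) : (nbrs d x).card ≤ 2 * d := by
  unfold nbrs
  refine Finset.card_image_le.trans ?_
  simp [mul_comm]

/-- Energy of an indicator function. -/
lemma ham_ind {d : ℕ} (hd : 0 < d) (A T U : Finset (Fin d → ℤ))
    (hU : ∀ x ∈ T, ∀ y ∈ nbrs d x, y ∉ T → x ∈ U) :
    ham d A (fun x => if x ∈ T then 1 else 0) ≤ U.card := by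
  have hdpos : (0 : ℝ) < d := by exact_mod_cast hd
  set S := A ∪ bdry d A with hS
  have h1 : ∑ x ∈ S, ∑ y ∈ S, (if y ∈ nbrs d x then
      ((if x ∈ T then (1 : ℝ) else 0) - (if y ∈ T then 1 else 0)) ^ 2 else 0) ≤
      ∑ x ∈ S, ∑ y ∈ S, ((if x ∈ U ∧ y ∈ nbrs d x then (1 : ℝ) else 0) +
        (if y ∈ U ∧ x ∈ nbrs d y then (1 : ℝ) else 0)) := by
    refine Finset.sum_le_sum fun x _ => Finset.sum_le_sum fun y _ => ?_
    have n1 : (0 : ℝ) ≤ if x ∈ U ∧ y ∈ nbrs d x then (1 : ℝ) else 0 := by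
      split_ifs <;> norm_num
    have n2 : (0 : ℝ) ≤ if y ∈ U ∧ x ∈ nbrs d y then (1 : ℝ) else 0 := by
      split_ifs <;> norm_num
    by_cases hxy : y ∈ nbrs d x
    · rw [if_pos hxy]
      by_cases hx : x ∈ T <;> by_cases hy : y ∈ T
      · rw [if_pos hx, if_pos hy]; norm_num; linarith
      · rw [if_pos hx, if_neg hy, if_pos (⟨hU x hx y hxy hy, hxy⟩ : x ∈ U ∧ y ∈ nbrs d x)]
        norm_num; exact n2
      · rw [if_neg hx, if_pos hy,
          if_pos (⟨hU y hy x (mem_nbrs_symm hxy) hx, mem_nbrs_symm hxy⟩ : y ∈ U ∧ x ∈ nbrs d y)]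
        norm_num; exact n1
      · rw [if_neg hx, if_neg hy]; norm_num; linarith
    · rw [if_neg hxy]; linarith
  have h2 : ∑ x ∈ S, ∑ y ∈ S, (if x ∈ U ∧ y ∈ nbrs d x then (1 : ℝ) else 0) ≤
      2 * d * U.card := by
    calc _ ≤ ∑ x ∈ S, (if x ∈ U then (2 * d : ℝ) else 0) := by
          refine Finset.sum_le_sum fun x _ => ?_
          by_cases hx : x ∈ U
          · simp only [hx, true_and, if_true]
            rw [Finset.sum_boole]
            have : (S.filter (fun y => y ∈ nbrs d x)).card ≤ 2 * d :=
              (Finset.card_le_card (fun y hy => (Finset.mem_filter.1 hy).2)).trans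
                (card_nbrs_le d x)
            exact_mod_cast this
          · simp [hx]
      _ = (S.filter (fun x => x ∈ U)).card * (2 * d : ℝ) := by
          rw [← Finset.sum_filter, Finset.sum_const, nsmul_eq_mul]
      _ ≤ U.card * (2 * d : ℝ) := by
          have : (S.filter (fun x => x ∈ U)).card ≤ U.card :=
            Finset.card_le_card (fun y hy => (Finset.mem_filter.1 hy).2)
          gcongr
      _ = _ := by ring
  have h3 : ∑ x ∈ S, ∑ y ∈ S, (if y ∈ U ∧ x ∈ nbrs d y then (1 : ℝ) else 0) ≤
      2 * d * U.card := by
    rw [Finset.sum_comm]; exact h2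
  simp only [Finset.sum_add_distrib] at h1
  unfold ham
  rw [← hS]
  have h4 : (0 : ℝ) ≤ U.card := by positivity
  rw [one_div, inv_mul_le_iff₀ (by positivity)]
  nlinarith

lemma hamBil_single {d : ℕ} (hd : 0 < d) (A : Finset (Fin d → ℤ)) (x : A) :
    hamBil d A (Pi.single x 1) (Pi.single x 1) ≤ 1 := by
  rw [hamBil_self]
  have : extz A (Pi.single x 1) = fun y => if y ∈ ({x.1} : Finset (Fin d → ℤ)) then 1 else 0 := by
    ext y
    unfold extz
    by_cases hy : y = x.1
    · subst hy; simp
    · simp only [Finset.mem_singleton, hy, if_false]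
      split_ifs with h
      · rw [Pi.single_eq_of_ne]
        intro e
        exact hy (congrArg Subtype.val e)
      · rfl
  rw [this]
  refine (ham_ind hd A {x.1} {x.1} fun y hy _ _ _ => hy).trans ?_
  simp

lemma card_Icc_box (N : ℕ) : (Finset.Icc (-(N / 2 : ℤ)) (N / 2 : ℤ)).card = 2 * (N / 2) + 1 := by
  rw [Int.card_Icc]; omega

lemma card_box (d N : ℕ) : (box d N).card = (2 * (N / 2) + 1) ^ d := by
  unfold _root_.box
  rw [Fintype.card_piFinset]
  simp only [card_Icc_box, Finset.prod_const, Finset.card_univ, Fintype.card_fin]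

lemma card_face (d N : ℕ) (i : Fin d) (m : ℤ) :
    ((box d N).filter (fun x => x i = m)).card ≤ (2 * (N / 2) + 1) ^ (d - 1) := by
  have hsub : (box d N).filter (fun x => x i = m) ⊆ Fintype.piFinset (Function.update
      (fun _ => Finset.Icc (-(N / 2 : ℤ)) (N / 2 : ℤ)) i {m}) := by
    intro x hx
    rw [Finset.mem_filter] at hx
    rw [Fintype.mem_piFinset]
    intro j
    by_cases hj : j = i
    · subst hj; simp [hx.2]
    · rw [Function.update_of_ne hj]
      exact Fintype.mem_piFinset.1 hx.1 j
  refine (Finset.card_le_card hsub).trans ?_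
  rw [Fintype.card_piFinset, ← Finset.mul_prod_erase Finset.univ _ (Finset.mem_univ i)]
  have : ∏ j ∈ Finset.univ.erase i, (Function.update
      (fun _ : Fin d => Finset.Icc (-(N / 2 : ℤ)) (N / 2 : ℤ)) i {m} j).card =
      ∏ j ∈ Finset.univ.erase i, (2 * (N / 2) + 1) := by
    refine Finset.prod_congr rfl fun j hj => ?_
    rw [Function.update_of_ne (Finset.ne_of_mem_erase hj), card_Icc_box]
  rw [this, Finset.prod_const, Finset.card_erase_of_mem (Finset.mem_univ i)]
  simp

lemma hamBil_one {d : ℕ} (hd : 0 < d) (N : ℕ) :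
    hamBil d (box d N) (fun _ => 1) (fun _ => 1) ≤
      2 * d * ((2 * (N / 2) + 1 : ℕ) : ℝ) ^ (d - 1) := by
  rw [hamBil_self]
  have : extz (box d N) (fun _ => 1) = fun y => if y ∈ box d N then 1 else 0 := by
    ext y
    unfold extz
    split_ifs <;> rfl
  rw [this]
  set U : Finset (Fin d → ℤ) := (Finset.univ : Finset (Fin d × Bool)).biUnion fun q =>
    (box d N).filter (fun x => x q.1 = if q.2 then (N / 2 : ℤ) else -(N / 2 : ℤ)) with hUdef
  refine (ham_ind hd _ (box d N) U ?_).trans ?_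
  · intro x hx y hy hyn
    unfold nbrs at hy
    rw [Finset.mem_image] at hy
    obtain ⟨⟨i, s⟩, -, rfl⟩ := hy
    rw [hUdef, Finset.mem_biUnion]
    refine ⟨(i, s), Finset.mem_univ _, Finset.mem_filter.2 ⟨hx, ?_⟩⟩
    by_contra hne
    apply hyn
    unfold _root_.box at hx ⊢
    rw [Fintype.mem_piFinset] at hx ⊢
    intro j
    by_cases hj : j = i
    · subst hj
      have := hx j
      rw [Finset.mem_Icc] at this
      cases s
      · simp at hne ⊢; omega
      · simp at hne ⊢; omega
    · simp only [Function.update_of_ne hj]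
      exact hx j
  · have h1 : U.card ≤ ∑ _q : Fin d × Bool, (2 * (N / 2) + 1) ^ (d - 1) :=
      Finset.card_biUnion_le.trans (Finset.sum_le_sum fun q _ => card_face d N _ _)
    have h2 : ∑ _q : Fin d × Bool, (2 * (N / 2) + 1) ^ (d - 1) =
        2 * d * (2 * (N / 2) + 1) ^ (d - 1) := by
      simp; ring
    rw [h2] at h1
    exact_mod_cast h1

lemma volume_bound {d : ℕ} (hd : 3 ≤ d) {c : ℝ} (hc : 0 < c) (h : ℝ) {N : ℕ}
    (hN : 4 * d * h ^ 2 / c ≤ N) :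
    c / 2 * (N : ℝ) ^ d ≤ c * Fintype.card (box d N) -
      h ^ 2 * hamBil d (box d N) (fun _ => 1) (fun _ => 1) := by
  have h1 := hamBil_one (by omega : 0 < d) N
  rw [Fintype.card_coe, card_box]
  have hLN : (N : ℝ) ≤ ((2 * (N / 2) + 1 : ℕ) : ℝ) := by
    exact_mod_cast (by omega : N ≤ 2 * (N / 2) + 1)
  rw [Nat.cast_pow]
  set L : ℝ := ((2 * (N / 2) + 1 : ℕ) : ℝ) with hL
  have hL0 : 0 ≤ L := by positivity
  obtain ⟨k, rfl⟩ : ∃ k, d = k + 1 := ⟨d - 1, by omega⟩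
  rw [Nat.add_sub_cancel] at h1
  have h2 : 4 * ((k + 1 : ℕ) : ℝ) * h ^ 2 ≤ c * L := by
    rw [div_le_iff₀ hc] at hN
    nlinarith
  have h3 : (N : ℝ) ^ (k + 1) ≤ L ^ (k + 1) := by gcongr
  have h4 := mul_le_mul_of_nonneg_left h1 (sq_nonneg h)
  have h5 := mul_le_mul_of_nonneg_right h2 (pow_nonneg hL0 k)
  have h6 := mul_le_mul_of_nonneg_left h3 hc.le
  rw [pow_succ L k] at *
  nlinarith

lemma main_est {d N : ℕ} (a b : ℝ) (hb : 0 < b) {C ε : ℝ} (hC : 0 < C) {m η : ℝ}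
    (hB : ∀ (φ : box d N → ℝ) x, φ x ^ 2 ≤ C * hamBil d (box d N) φ φ)
    (hm : b * (ε * (N : ℝ) ^ d) + η * (N : ℝ) ^ d ≤ m)
    (hlow : ENNReal.ofReal ((∫ φ, rexp (-hamBil d (box d N) φ φ)) * rexp m) ≤
      ∫⁻ φ in {φ : box d N → ℝ | ∀ x, 0 ≤ φ x}, ENNReal.ofReal (rexp (-hamBil d (box d N) φ φ +
        b * ∑ x, (if φ x ∈ Set.Icc 0 a then (1 : ℝ) else 0)))) :
    pin d N a b ({ψ | ε * (N : ℝ) ^ d < (numPinned d N a ψ : ℝ)} ∩ wallOn d N (box d N)) /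
        pin d N a b (wallOn d N (box d N)) ≥
      1 - ENNReal.ofReal (Real.exp (-η * (N : ℝ) ^ d)) := by
  have hW : wallOn d N (box d N) = {φ : box d N → ℝ | ∀ x, 0 ≤ φ x} := by
    ext ψ
    simp only [wallOn, Set.mem_ofPred_eq]
    exact ⟨fun h x => h x x.2, fun h x _ => h x⟩
  rw [hW]
  set W : Set (box d N → ℝ) := {φ : box d N → ℝ | ∀ x, 0 ≤ φ x} with hWdef
  set A : Set (box d N → ℝ) := {ψ | ε * (N : ℝ) ^ d < (numPinned d N a ψ : ℝ)} with hA
  set B := hamBil d (box d N) with hBdef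
  set Z := ∫ φ, rexp (-B φ φ) with hZdef
  have hmB : Measurable fun φ : box d N → ℝ => B φ φ := (bil_cont B).measurable
  have hmI : Measurable fun φ : box d N → ℝ =>
      ∑ x, (if φ x ∈ Set.Icc 0 a then (1 : ℝ) else 0) := by
    refine Finset.measurable_sum _ fun x _ => ?_
    exact Measurable.ite (measurable_pi_apply x measurableSet_Icc) measurable_const measurable_const
  have hD : ∀ φ, pinDensity d N a b φ = rexp (-B φ φ +
      b * ∑ x, (if φ x ∈ Set.Icc 0 a then (1 : ℝ) else 0)) := by
    intro φ
    rw [hBdef, hamBil_self]; rfl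
  have hnum : ∀ φ : box d N → ℝ, ∑ x, (if φ x ∈ Set.Icc 0 a then (1 : ℝ) else 0) =
      numPinned d N a φ := by
    intro φ
    rw [Finset.sum_boole]; rfl
  have hmD : Measurable fun φ => pinDensity d N a b φ := by
    simp only [hD]
    fun_prop
  have hZi : Integrable fun φ : box d N → ℝ => rexp (-B φ φ) := by
    simpa using bil_integrable B hC hB one_pos
  have hZpos : 0 < Z := integral_exp_pos hZi
  have hDi : Integrable fun φ => pinDensity d N a b φ := by
    have : (fun φ => pinDensity d N a b φ) = fun φ => rexp (b * ∑ x,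
        (if φ x ∈ Set.Icc 0 a then (1 : ℝ) else 0)) * rexp (-B φ φ) := by
      ext φ
      rw [hD, add_comm, Real.exp_add]
    rw [this]
    refine hZi.bdd_mul (c := rexp (b * Fintype.card (box d N)))
      (by apply Measurable.aestronglyMeasurable; fun_prop) (Filter.Eventually.of_forall fun φ => ?_)
    rw [Real.norm_eq_abs, abs_of_pos (exp_pos _), exp_le_exp, hnum]
    gcongr
    unfold numPinned
    exact Finset.card_le_univ _
  simp only [← hD] at hlow
  set ν : Measure (box d N → ℝ) :=
    volume.withDensity (fun ψ => ENNReal.ofReal (pinDensity d N a b ψ)) with hν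
  have hνW : ν W = ∫⁻ φ in W, ENNReal.ofReal (pinDensity d N a b φ) := withDensity_apply' _ _
  have hνW0 : ν W ≠ 0 := by
    rw [hνW]
    refine (lt_of_lt_of_le ?_ hlow).ne'
    rw [ENNReal.ofReal_pos]
    positivity
  have hνuniv : ν Set.univ = ENNReal.ofReal (pinZ d N a b) := by
    rw [hν, withDensity_apply' _ _, Measure.restrict_univ, pinZ,
      ofReal_integral_eq_lintegral_ofReal hDi
        (Filter.Eventually.of_forall fun φ => (exp_pos _).le)]
  have hνWle : ν W ≤ ν Set.univ := measure_mono (Set.subset_univ _)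
  have hνWt : ν W ≠ ⊤ := by
    refine ne_top_of_le_ne_top ?_ hνWle
    rw [hνuniv]; exact ENNReal.ofReal_ne_top
  have hk0 : (ENNReal.ofReal (pinZ d N a b))⁻¹ ≠ 0 := ENNReal.inv_ne_zero.2 ENNReal.ofReal_ne_top
  have hkt : (ENNReal.ofReal (pinZ d N a b))⁻¹ ≠ ⊤ := by
    rw [ENNReal.inv_ne_top, ← hνuniv]
    exact fun h => hνW0 (le_antisymm (h ▸ hνWle) bot_le)
  have hpin : ∀ s, pin d N a b s = (ENNReal.ofReal (pinZ d N a b))⁻¹ * ν s := fun s => rfl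
  rw [hpin, hpin, ENNReal.mul_div_mul_left _ _ hk0 hkt]
  -- the bad event
  have hbad : ν (W \ A) ≤ ENNReal.ofReal (rexp (-η * (N : ℝ) ^ d)) * ν W := by
    calc ν (W \ A) = ∫⁻ φ in W \ A, ENNReal.ofReal (pinDensity d N a b φ) :=
          withDensity_apply' _ _
      _ ≤ ∫⁻ φ in W \ A, ENNReal.ofReal (rexp (b * (ε * (N : ℝ) ^ d)) * rexp (-B φ φ)) := by
          refine setLIntegral_mono (by fun_prop) fun φ hφ => ?_
          apply ENNReal.ofReal_le_ofReal
          rw [hD, ← Real.exp_add, exp_le_exp, hnum]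
          have h1 : (numPinned d N a φ : ℝ) ≤ ε * (N : ℝ) ^ d := not_lt.1 hφ.2
          have := mul_le_mul_of_nonneg_left h1 hb.le
          linarith
      _ ≤ ∫⁻ φ, ENNReal.ofReal (rexp (b * (ε * (N : ℝ) ^ d)) * rexp (-B φ φ)) :=
          setLIntegral_le_lintegral _ _
      _ = ENNReal.ofReal (rexp (b * (ε * (N : ℝ) ^ d)) * Z) := by
          rw [← ofReal_integral_eq_lintegral_ofReal (hZi.const_mul _)
            (Filter.Eventually.of_forall fun φ => by positivity), integral_const_mul]
      _ ≤ ENNReal.ofReal (rexp (-η * (N : ℝ) ^ d) * (Z * rexp m)) := by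
          apply ENNReal.ofReal_le_ofReal
          have : rexp (b * (ε * (N : ℝ) ^ d)) ≤ rexp (-η * (N : ℝ) ^ d) * rexp m := by
            rw [← Real.exp_add, exp_le_exp]
            linarith
          nlinarith
      _ = ENNReal.ofReal (rexp (-η * (N : ℝ) ^ d)) * ENNReal.ofReal (Z * rexp m) :=
          ENNReal.ofReal_mul (exp_pos _).le
      _ ≤ ENNReal.ofReal (rexp (-η * (N : ℝ) ^ d)) * ν W := by
          rw [hνW]; gcongr
  have hsplit : ν W ≤ ν (A ∩ W) + ENNReal.ofReal (rexp (-η * (N : ℝ) ^ d)) * ν W := by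
    calc ν W = ν ((A ∩ W) ∪ (W \ A)) := by
          congr 1
          rw [Set.inter_comm, Set.inter_union_sdiff]
      _ ≤ ν (A ∩ W) + ν (W \ A) := measure_union_le _ _
      _ ≤ _ := by gcongr
  rw [ge_iff_le, tsub_le_iff_right]
  calc (1 : ENNReal) = ν W / ν W := (ENNReal.div_self hνW0 hνWt).symm
    _ ≤ (ν (A ∩ W) + ENNReal.ofReal (rexp (-η * (N : ℝ) ^ d)) * ν W) / ν W := by gcongr
    _ = ν (A ∩ W) / ν W + ENNReal.ofReal (rexp (-η * (N : ℝ) ^ d)) := by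
        rw [ENNReal.add_div, ENNReal.mul_div_cancel_right hνW0 hνWt]

/-- Absence of a wetting transition for the GFF with square-well pinning above a
hard wall: for `d ≥ 3` and any `a, b > 0` there are `ε, η > 0` with
`P̃_{N,a,b}(ξ̃_N > εN^d | Ω_N⁺) ≥ 1 - e^{-ηN^d}` for all large `N`. -/
theorem no_wetting_transition (d : ℕ) (hd : 3 ≤ d) (a b : ℝ) (ha : 0 < a) (hb : 0 < b) :
    ∃ ε η : ℝ, 0 < ε ∧ 0 < η ∧ ∃ N₀ : ℕ, ∀ N : ℕ, N₀ ≤ N →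
      pin d N a b
            ({ψ | ε * (N : ℝ) ^ d < (numPinned d N a ψ : ℝ)} ∩ wallOn d N (box d N)) /
          pin d N a b (wallOn d N (box d N)) ≥
        1 - ENNReal.ofReal (Real.exp (-η * (N : ℝ) ^ d)) := by
  have hdpos : (0 : ℝ) < d := by exact_mod_cast (by omega : 0 < d)
  have hC : (0 : ℝ) < 16 * d := by positivity
  obtain ⟨h, c, hc, hmain⟩ := main_abs ha hb hC one_pos
  refine ⟨c / (4 * b), c / 4, by positivity, by positivity, ⌈4 * d * h ^ 2 / c⌉₊, ?_⟩
  intro N hN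
  have hvol := volume_bound hd hc h (Nat.ceil_le.1 hN)
  have hB : ∀ (φ : box d N → ℝ) x, φ x ^ 2 ≤ 16 * d * hamBil d (box d N) φ φ := by
    intro φ x
    have := ham_lb hd (box d N) (extz (box d N) φ) (extz_of_notMem _ _) x.1
    rw [hamBil_self]
    convert this using 2
    simp [extz]
  have hlow := hmain (box d N) (hamBil d (box d N)) hB (hamBil_symm d _)
    (hamBil_single (by omega) _) (hamBil_abs d _)
  refine main_est a b hb hC hB ?_ hlow
  refine le_trans (le_of_eq ?_) hvol
  field_simp
  ring
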